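/- Let D be a probability distribution on ℝ whose support is a bounded set of nonnegative reals containing at least two distinct values, and suppose that m_n, the expectation of the minimum of n i.i.d. draws from D, either is bounded away from zero or vanishes subexponentially (for every c > 0, e^{c n}·m_n → ∞ as n → ∞). Then there exists N such that for every n ≥ N the following holds: in divide-and-choose with n goods, with all values g^D_1,…,g^D_n, g^C_1,…,g^C_n i.i.d. from D, for any measurable divider strategy s : ℝ^n → [−1,1]^n that, for every realization of g^D, maximizes the divider's expected utility U over [−1,1]^n (the chooser picking her strictly preferred pile and breaking indifference in the divider's favor), the divider is ex ante strictly better off: the expectation of the divider's realized payoff strictly exceeds the expectation of the chooser's realized payoff. -/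

import Mathlib

open BigOperators MeasureTheory

/-- The probability, over the chooser's values drawn i.i.d. from `D`, that the chooser
strictly prefers pile 1 under the division `q`. -/
noncomputable def chooseProb (D : Measure ℝ) {n : ℕ} (q : Fin n → ℝ) : ℝ :=
  ((Measure.pi fun _ : Fin n => D) {x | 0 < ∑ i, q i * x i}).toReal

/-- The divider's expected utility from the division `q` when his values are `gD` and the
chooser's values are i.i.d. from `D`. -/
noncomputable def divUtility (D : Measure ℝ) {n : ℕ} (q gD : Fin n → ℝ) : ℝ :=
  chooseProb D q * ∑ i, ((1 - q i) / 2) * gD i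
    + (1 - chooseProb D q) * ∑ i, ((1 + q i) / 2) * gD i

/-- The chooser picks pile 1: either she strictly prefers it, or she is indifferent and the
divider weakly prefers pile 2 for himself (indifference is broken in the divider's favor). -/
def picksPile1 {n : ℕ} (q gD gC : Fin n → ℝ) : Prop :=
  0 < ∑ i, q i * gC i ∨ ((∑ i, q i * gC i) = 0 ∧ (∑ i, q i * gD i) < 0)

open Classical in
/-- The divider's realized payoff. -/
noncomputable def divPayoff {n : ℕ} (q gD gC : Fin n → ℝ) : ℝ :=
  if picksPile1 q gD gC then ∑ i, ((1 - q i) / 2) * gD i else ∑ i, ((1 + q i) / 2) * gD i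

open Classical in
/-- The chooser's realized payoff. -/
noncomputable def choPayoff {n : ℕ} (q gD gC : Fin n → ℝ) : ℝ :=
  if picksPile1 q gD gC then ∑ i, ((1 + q i) / 2) * gC i else ∑ i, ((1 - q i) / 2) * gC i

open ProbabilityTheory

section Moments

variable {D : Measure ℝ} [IsProbabilityMeasure D]

lemma memLp_weighted_sum {φ : ℝ → ℝ} (hφ : MemLp φ 2 D) {n : ℕ} (q : Fin n → ℝ) :
    MemLp (fun x : Fin n → ℝ => ∑ i, q i * φ (x i)) 2 (Measure.pi fun _ : Fin n => D) :=
  memLp_finsetSum _ fun i _ =>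
    (hφ.comp_measurePreserving (measurePreserving_eval (fun _ : Fin n => D) i)).const_mul (q i)

lemma integral_weighted_sum {φ : ℝ → ℝ} (hφ : Integrable φ D) {n : ℕ} (q : Fin n → ℝ) :
    ∫ x : Fin n → ℝ, ∑ i, q i * φ (x i) ∂(Measure.pi fun _ : Fin n => D)
      = (∑ i, q i) * ∫ x, φ x ∂D := by
  have hmp := fun i : Fin n => measurePreserving_eval (fun _ : Fin n => D) i
  have hi := fun i : Fin n => ((hmp i).integrable_comp_of_integrable hφ).const_mul (q i)
  simp only [Function.comp_def, Function.eval] at hi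
  rw [integral_finsetSum _ fun i _ => hi i, Finset.sum_mul]
  refine Finset.sum_congr rfl fun i _ => ?_
  rw [integral_const_mul]
  congr 1
  have h := integral_map (hmp i).measurable.aemeasurable (f := φ)
    ((hmp i).map_eq ▸ hφ.aestronglyMeasurable)
  rw [(hmp i).map_eq] at h
  exact h.symm

lemma integral_weighted_sum_sub_sq_le {φ : ℝ → ℝ} (hφ : MemLp φ 2 D) {n : ℕ} {q : Fin n → ℝ}
    (hq : ∀ i, q i ∈ Set.Icc (-1 : ℝ) 1) :
    ∫ x : Fin n → ℝ, (∑ i, q i * φ (x i) - (∑ i, q i) * ∫ y, φ y ∂D) ^ 2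
      ∂(Measure.pi fun _ : Fin n => D) ≤ n * Var[φ; D] := by
  have hsum := variance_sum_pi (μ := fun _ : Fin n => D) (X := fun i y => q i * φ y)
    fun i => hφ.const_mul (q i)
  have hfun : (∑ i, fun x : Fin n → ℝ => q i * φ (x i)) = fun x => ∑ i, q i * φ (x i) := by
    ext x; simp
  rw [hfun, variance_eq_integral (memLp_weighted_sum hφ q).aestronglyMeasurable.aemeasurable,
    integral_weighted_sum (hφ.integrable one_le_two)] at hsum
  rw [hsum]
  calc ∑ i, Var[fun y => q i * φ y; D] ≤ ∑ _i : Fin n, Var[φ; D] := by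
        refine Finset.sum_le_sum fun i _ => ?_
        rw [variance_const_mul]
        refine mul_le_of_le_one_left (variance_nonneg _ _) ?_
        nlinarith [(hq i).1, (hq i).2]
    _ = n * Var[φ; D] := by simp

lemma integrable_weighted_sum_sub_sq {φ : ℝ → ℝ} (hφ : MemLp φ 2 D) {n : ℕ} (q : Fin n → ℝ)
    (m : ℝ) :
    Integrable (fun x : Fin n → ℝ => (∑ i, q i * φ (x i) - m) ^ 2)
      (Measure.pi fun _ : Fin n => D) :=
  ((memLp_weighted_sum hφ q).sub (memLp_const m)).integrable_sq

/-- Chebyshev's inequality for weighted sums, phrased for a set on which the sum is far from its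
mean. -/
lemma measureReal_le_of_dist_mean (hD : MemLp id 2 D) {n : ℕ} {q : Fin n → ℝ}
    (hq : ∀ i, q i ∈ Set.Icc (-1 : ℝ) 1) {s : Set (Fin n → ℝ)} (hs : MeasurableSet s) {r : ℝ}
    (hr : 0 < r) (h : ∀ x ∈ s, r ≤ |∑ i, q i * x i - (∑ i, q i) * ∫ y, y ∂D|) :
    (Measure.pi fun _ : Fin n => D).real s ≤ n * Var[id; D] / r ^ 2 := by
  have h2 := integral_weighted_sum_sub_sq_le hD hq
  rw [le_div_iff₀ (by positivity)]
  refine le_trans ?_ h2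
  rw [← integral_indicator_one hs, ← integral_mul_const]
  refine integral_mono (((integrable_const 1).indicator hs).mul_const _)
    (integrable_weighted_sum_sub_sq hD q _) fun x => ?_
  by_cases hx : x ∈ s
  · have := h x hx
    simp only [Set.indicator_of_mem hx, Pi.one_apply, one_mul, id]
    rw [← sq_abs (_ - _)]
    gcongr
  · simp only [Set.indicator_of_notMem hx, zero_mul]
    positivity

lemma measurableSet_prefers {n : ℕ} (q : Fin n → ℝ) :
    MeasurableSet {x : Fin n → ℝ | 0 < ∑ i, q i * x i} :=
  measurableSet_lt measurable_const (by fun_prop)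

lemma chooseProb_le_of_sum_le (hD : MemLp id 2 D) (hm : 0 < ∫ y, y ∂D) {n : ℕ} (hn : 0 < n)
    {q : Fin n → ℝ} (hq : ∀ i, q i ∈ Set.Icc (-1 : ℝ) 1) {δ : ℝ} (hδ : 0 < δ)
    (h : ∑ i, q i ≤ -(δ * n)) :
    chooseProb D q ≤ Var[id; D] / (∫ y, y ∂D) ^ 2 / (δ ^ 2 * n) := by
  have hn' : (0 : ℝ) < n := by exact_mod_cast hn
  have := measureReal_le_of_dist_mean hD hq (measurableSet_prefers q)
    (r := (∫ y, y ∂D) * (δ * n)) (by positivity) fun x hx => by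
      simp only [Set.mem_ofPred_eq] at hx
      refine le_trans ?_ (le_abs_self _)
      nlinarith
  refine this.trans (le_of_eq ?_)
  field_simp

lemma le_chooseProb_of_le_sum (hD : MemLp id 2 D) (hm : 0 < ∫ y, y ∂D) {n : ℕ} (hn : 0 < n)
    {q : Fin n → ℝ} (hq : ∀ i, q i ∈ Set.Icc (-1 : ℝ) 1) {δ : ℝ} (hδ : 0 < δ)
    (h : δ * n ≤ ∑ i, q i) :
    1 - Var[id; D] / (∫ y, y ∂D) ^ 2 / (δ ^ 2 * n) ≤ chooseProb D q := by
  have hn' : (0 : ℝ) < n := by exact_mod_cast hn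
  have := measureReal_le_of_dist_mean hD hq (measurableSet_prefers q).compl
    (r := (∫ y, y ∂D) * (δ * n)) (by positivity) fun x hx => by
      simp only [Set.mem_compl_iff, Set.mem_ofPred_eq, not_lt] at hx
      refine le_trans ?_ (neg_le_abs _)
      nlinarith
  rw [probReal_compl_eq_one_sub (measurableSet_prefers q)] at this
  have h3 : (n : ℝ) * Var[id; D] / ((∫ y, y ∂D) * (δ * n)) ^ 2
      = Var[id; D] / (∫ y, y ∂D) ^ 2 / (δ ^ 2 * n) := by field_simp
  rw [h3] at this
  have h4 : chooseProb D q
    = (Measure.pi fun _ : Fin n => D).real {x : Fin n → ℝ | 0 < ∑ i, q i * x i} := rfl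
  linarith

lemma integral_abs_weighted_sum_le (hD : MemLp id 2 D) (hm : 0 < ∫ y, y ∂D) {n : ℕ}
    (hn : 0 < n) {q : Fin n → ℝ} (hq : ∀ i, q i ∈ Set.Icc (-1 : ℝ) 1) {l : ℝ} (hl : 0 < l) :
    ∫ x : Fin n → ℝ, |∑ i, q i * x i| ∂(Measure.pi fun _ : Fin n => D)
      ≤ (∫ y, y ∂D) * |∑ i, q i| + l * n + Var[id; D] / (4 * l) := by
  have hn' : (0 : ℝ) < n := by exact_mod_cast hn
  set m := (∑ i, q i) * ∫ y, y ∂D with hm'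
  have h2 := integral_weighted_sum_sub_sq_le hD hq
  have hi := integrable_weighted_sum_sub_sq hD q m
  have hle : ∫ x : Fin n → ℝ, |∑ i, q i * x i| ∂(Measure.pi fun _ : Fin n => D)
      ≤ ∫ x : Fin n → ℝ, ((|m| + l * n) + (∑ i, q i * id (x i) - m) ^ 2 / (4 * l * n))
        ∂(Measure.pi fun _ : Fin n => D) := by
    refine integral_mono ((memLp_weighted_sum hD q).integrable one_le_two).abs
      ((integrable_const _).add (hi.div_const _)) fun x => ?_
    simp only [id]
    have hz : |∑ i, q i * x i| ≤ |m| + |∑ i, q i * x i - m| := by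
      have := abs_add_le m (∑ i, q i * x i - m)
      rwa [add_sub_cancel] at this
    have hy : |∑ i, q i * x i - m| ≤ l * n + (∑ i, q i * x i - m) ^ 2 / (4 * l * n) := by
      rw [← sq_abs (∑ i, q i * x i - m), ← sub_le_iff_le_add', le_div_iff₀ (by positivity)]
      nlinarith [sq_nonneg (|∑ i, q i * x i - m| - 2 * (l * n))]
    linarith
  refine hle.trans ?_
  rw [integral_add (integrable_const _) (hi.div_const _), integral_div, integral_const, hm',
    abs_mul, abs_of_pos hm]
  simp only [probReal_univ, one_smul]
  rw [mul_comm |∑ i, q i|]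
  refine add_le_add le_rfl ?_
  rw [div_le_div_iff₀ (by positivity) (by positivity)]
  exact (mul_le_mul_of_nonneg_right h2 (by positivity : 0 ≤ 4 * l)).trans (le_of_eq (by ring))

end Moments

/-- Twice the divider's expected gain over half of his total value, under the division `q`. -/
noncomputable def surplus (D : Measure ℝ) {n : ℕ} (q gD : Fin n → ℝ) : ℝ :=
  (∑ i, q i * gD i) * (1 - 2 * chooseProb D q)

lemma chooseProb_nonneg (D : Measure ℝ) {n : ℕ} (q : Fin n → ℝ) : 0 ≤ chooseProb D q :=
  ENNReal.toReal_nonneg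

lemma chooseProb_le_one (D : Measure ℝ) [IsProbabilityMeasure D] {n : ℕ} (q : Fin n → ℝ) :
    chooseProb D q ≤ 1 :=
  measureReal_le_one

lemma sum_share_pile1 {n : ℕ} (q g : Fin n → ℝ) :
    ∑ i, ((1 + q i) / 2) * g i = (∑ i, g i + ∑ i, q i * g i) / 2 := by
  rw [← Finset.sum_add_distrib, Finset.sum_div]
  exact Finset.sum_congr rfl fun i _ => by ring

lemma sum_share_pile2 {n : ℕ} (q g : Fin n → ℝ) :
    ∑ i, ((1 - q i) / 2) * g i = (∑ i, g i - ∑ i, q i * g i) / 2 := by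
  rw [← Finset.sum_sub_distrib, Finset.sum_div]
  exact Finset.sum_congr rfl fun i _ => by ring

lemma divUtility_eq_surplus (D : Measure ℝ) {n : ℕ} (q g : Fin n → ℝ) :
    divUtility D q g = (∑ i, g i + surplus D q g) / 2 := by
  rw [divUtility, surplus, sum_share_pile1, sum_share_pile2]
  ring

section Surplus

variable {D : Measure ℝ} [IsProbabilityMeasure D]

/-- If a division has positive surplus, then one of its two orientations gives pile 1 at least that
advantage for the divider, while the chooser does not much prefer pile 1 on average. -/
lemma exists_orientation (hD : MemLp id 2 D) (hm : 0 < ∫ y, y ∂D) {n : ℕ} (hn : 0 < n)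
    {q g : Fin n → ℝ} (hq : ∀ i, q i ∈ Set.Icc (-1 : ℝ) 1) {δ : ℝ} (hδ : 0 < δ)
    (hN : 4 * (Var[id; D] / (∫ y, y ∂D) ^ 2) ≤ δ ^ 2 * n) (hpos : 0 < surplus D q g) :
    ∃ p : Fin n → ℝ, (∀ i, p i ∈ Set.Icc (-1 : ℝ) 1) ∧ |∑ i, p i| = |∑ i, q i| ∧
      surplus D q g ≤ ∑ i, p i * g i ∧ ∑ i, p i < δ * n := by
  have hn' : (0 : ℝ) < n := by exact_mod_cast hn
  have hK : Var[id; D] / (∫ y, y ∂D) ^ 2 / (δ ^ 2 * n) ≤ 1 / 4 := by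
    rw [div_le_div_iff₀ (by positivity) (by norm_num)]
    linarith
  have h0 := chooseProb_nonneg D q
  have h1 := chooseProb_le_one D q
  unfold surplus at hpos ⊢
  rcases pos_and_pos_or_neg_and_neg_of_mul_pos hpos with ⟨ha, hP⟩ | ⟨ha, hP⟩
  · refine ⟨q, hq, rfl, by nlinarith, ?_⟩
    by_contra! hf
    linarith [le_chooseProb_of_le_sum hD hm hn hq hδ hf]
  · refine ⟨fun i => -q i, fun i => ⟨by linarith [(hq i).2], by linarith [(hq i).1]⟩, ?_, ?_, ?_⟩
    · rw [Finset.sum_neg_distrib, abs_neg]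
    · simp only [neg_mul, Finset.sum_neg_distrib]
      nlinarith
    · rw [Finset.sum_neg_distrib]
      by_contra! hf
      linarith [chooseProb_le_of_sum_le hD hm hn hq hδ (by linarith)]

/-- Shifting weight to the first pile: when the division `p` heavily favours pile 2, the divider can
secure nearly the whole cake. -/
lemma le_surplus_of_sum_le (hD : MemLp id 2 D) (hm : 0 < ∫ y, y ∂D) {n : ℕ} (hn : 0 < n)
    {b : ℝ} {g p : Fin n → ℝ} (hg : ∀ i, g i ∈ Set.Icc 0 b)
    (hp : ∀ i, p i ∈ Set.Icc (-1 : ℝ) 1) {δ : ℝ} (hδ : 0 < δ) (hδ' : δ ≤ 1 / 4)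
    (hf : ∑ i, p i ≤ -(2 * δ * n)) {σ : ℝ} (hσ : σ ≤ ∑ i, p i * g i)
    (hopt : ∀ q : Fin n → ℝ, (∀ i, q i ∈ Set.Icc (-1 : ℝ) 1) → surplus D q g ≤ σ) {K : ℝ}
    (hK : 8 * (Var[id; D] / (∫ y, y ∂D) ^ 2) * b / δ ^ 2 ≤ K) :
    δ * (∑ i, g i - ∑ i, p i * g i) ≤ K ∧ ∑ i, p i * g i - K ≤ σ := by
  have hn' : (0 : ℝ) < n := by exact_mod_cast hn
  have hb : 0 ≤ b := (hg ⟨0, hn⟩).1.trans (hg ⟨0, hn⟩).2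
  set V := Var[id; D] / (∫ y, y ∂D) ^ 2 with hV
  set r : Fin n → ℝ := fun i => p i + δ * (1 - p i) with hr
  have hrbox : ∀ i, r i ∈ Set.Icc (-1 : ℝ) 1 := fun i => by
    obtain ⟨h1, h2⟩ := hp i
    constructor <;> simp only [hr] <;> nlinarith
  have hrsum : ∑ i, r i = ∑ i, p i + δ * (n - ∑ i, p i) := by
    simp [hr, Finset.sum_add_distrib, ← Finset.mul_sum, Finset.sum_sub_distrib]
  have hrg : ∑ i, r i * g i = ∑ i, p i * g i + δ * (∑ i, g i - ∑ i, p i * g i) := by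
    rw [← Finset.sum_sub_distrib, Finset.mul_sum, ← Finset.sum_add_distrib]
    exact Finset.sum_congr rfl fun i _ => by simp only [hr]; ring
  have hP := chooseProb_le_of_sum_le hD hm hn hrbox (δ := δ / 2) (by positivity) (by
    rw [hrsum]; nlinarith [mul_pos hδ hn'])
  rw [← hV] at hP
  have hrle : ∑ i, r i * g i ≤ b * n := by
    calc ∑ i, r i * g i ≤ ∑ _i : Fin n, b := Finset.sum_le_sum fun i _ => by
          nlinarith [(hrbox i).2, (hg i).1, (hg i).2]
      _ = b * n := by simp [mul_comm]
  have hpT : ∑ i, p i * g i ≤ ∑ i, g i := Finset.sum_le_sum fun i _ => by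
    nlinarith [(hp i).2, (hg i).1]
  have hPr : 2 * (chooseProb D r * ∑ i, r i * g i) ≤ K := by
    calc 2 * (chooseProb D r * ∑ i, r i * g i) ≤ 2 * (V / ((δ / 2) ^ 2 * n) * (b * n)) := by
          have h3 := mul_le_mul_of_nonneg_left hrle (chooseProb_nonneg D r)
          have h4 := mul_le_mul_of_nonneg_right hP (by positivity : 0 ≤ b * n)
          linarith
      _ = 8 * V * b / δ ^ 2 := by field_simp; ring
      _ ≤ K := hK
  have hs := hopt r hrbox
  have hσr : ∑ i, r i * g i - K ≤ σ := by
    unfold surplus at hs; nlinarith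
  have hnn : 0 ≤ δ * (∑ i, g i - ∑ i, p i * g i) := mul_nonneg hδ.le (by linarith)
  constructor <;> linarith

/-- The divider's affine strategy `q i = (g i - (μ + η)) / (b + 1)`. -/
lemma le_surplus_of_typical (hD : MemLp id 2 D) (hm : 0 < ∫ y, y ∂D) {n : ℕ} (hn : 0 < n)
    {b η τ : ℝ} {g : Fin n → ℝ} (hg : ∀ i, g i ∈ Set.Icc 0 b) (hmb : ∫ y, y ∂D ≤ b)
    (hη : 0 < η) (hη1 : η ≤ 1) (hηv : 4 * (η * ∫ y, y ∂D) ≤ Var[id; D])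
    (hτ : 0 < τ) (hτη : 2 * τ ≤ η) (hτv : 4 * (τ * (∫ y, y ∂D + 2)) ≤ Var[id; D])
    (hT : |∑ i, g i - n * ∫ y, y ∂D| ≤ τ * n)
    (hS : |∑ i, g i ^ 2 - n * ∫ y, y ^ 2 ∂D| ≤ τ * n)
    (hN : 4 * (Var[id; D] / (∫ y, y ∂D) ^ 2) ≤ (η / (2 * (b + 1))) ^ 2 * n) {σ : ℝ}
    (hopt : ∀ q : Fin n → ℝ, (∀ i, q i ∈ Set.Icc (-1 : ℝ) 1) → surplus D q g ≤ σ) :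
    Var[id; D] / (4 * (b + 1)) * n ≤ σ := by
  have hn' : (0 : ℝ) < n := by exact_mod_cast hn
  have hvar : Var[id; D] = ∫ y, y ^ 2 ∂D - (∫ y, y ∂D) ^ 2 := by
    rw [variance_eq_sub hD]; simp
  set m := ∫ y, y ∂D
  set v := Var[id; D]
  set m2 := ∫ y, y ^ 2 ∂D
  have hb : 0 < b + 1 := by linarith
  obtain ⟨hT1, hT2⟩ := abs_le.1 hT
  obtain ⟨hS1, hS2⟩ := abs_le.1 hS
  set r : Fin n → ℝ := fun i => (g i - (m + η)) / (b + 1) with hr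
  have hrbox : ∀ i, r i ∈ Set.Icc (-1 : ℝ) 1 := fun i => by
    obtain ⟨h1, h2⟩ := hg i
    constructor
    · simp only [hr]; rw [le_div_iff₀ hb]; linarith
    · simp only [hr]; rw [div_le_iff₀ hb]; linarith
  have hrsum : ∑ i, r i = (∑ i, g i - n * (m + η)) / (b + 1) := by
    simp only [hr]
    rw [← Finset.sum_div, Finset.sum_sub_distrib, Finset.sum_const, Finset.card_univ,
      Fintype.card_fin, nsmul_eq_mul]
  have hrg : ∑ i, r i * g i = (∑ i, g i ^ 2 - (m + η) * ∑ i, g i) / (b + 1) := by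
    rw [Finset.mul_sum, ← Finset.sum_sub_distrib, Finset.sum_div]
    exact Finset.sum_congr rfl fun i _ => by simp only [hr]; ring
  have hP := chooseProb_le_of_sum_le hD hm hn hrbox (δ := η / (2 * (b + 1))) (by positivity) (by
    rw [hrsum, div_le_iff₀ hb]
    have : -(η / (2 * (b + 1)) * n) * (b + 1) = -(η * n / 2) := by field_simp
    rw [this]
    nlinarith)
  have hP4 : chooseProb D r ≤ 1 / 4 := by
    refine hP.trans ?_
    rw [div_le_div_iff₀ (by positivity) (by norm_num)]
    linarith
  have hlow : v / 2 * n ≤ ∑ i, g i ^ 2 - (m + η) * ∑ i, g i := by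
    have h1 : (m + η) * ∑ i, g i ≤ (m + η) * ((m + τ) * n) :=
      mul_le_mul_of_nonneg_left (by linarith) (by linarith)
    have h2 : (m2 - τ - (m + η) * (m + τ)) * n ≤ ∑ i, g i ^ 2 - (m + η) * ∑ i, g i := by linarith
    refine le_trans (mul_le_mul_of_nonneg_right ?_ hn'.le) h2
    nlinarith
  have hrlow : v / (2 * (b + 1)) * n ≤ ∑ i, r i * g i := by
    rw [hrg, le_div_iff₀ hb]
    refine le_trans (le_of_eq ?_) hlow
    field_simp
  have hv : 0 ≤ v := variance_nonneg _ _
  refine le_trans ?_ (hopt r hrbox)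
  unfold surplus
  have h0 : 0 ≤ v / (2 * (b + 1)) * n := by positivity
  have h5 : v / (4 * (b + 1)) * n = v / (2 * (b + 1)) * n * (1 / 2) := by field_simp; ring
  rw [h5]
  exact mul_le_mul hrlow (by linarith) (by norm_num) (h0.trans hrlow)

end Surplus

section Payoffs

variable {D : Measure ℝ} [IsProbabilityMeasure D]

lemma eventually_le_mul_natCast (C : ℝ) {d : ℝ} (hd : 0 < d) :
    ∀ᶠ n : ℕ in Filter.atTop, C ≤ d * n :=
  (tendsto_natCast_atTop_atTop.const_mul_atTop hd).eventually_ge_atTop C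

/-- For typical values of the divider, his optimal surplus exceeds the chooser's by a linear
amount. -/
lemma exists_surplus_gap (hD : MemLp id 2 D) (hm : 0 < ∫ y, y ∂D) (hv : 0 < Var[id; D]) {b : ℝ}
    (hmb : ∫ y, y ∂D ≤ b) :
    ∃ c > 0, ∃ τ > 0, ∀ᶠ n : ℕ in Filter.atTop, ∀ g q : Fin n → ℝ, (∀ i, g i ∈ Set.Icc 0 b) →
      (∀ i, q i ∈ Set.Icc (-1 : ℝ) 1) →
      |∑ i, g i - n * ∫ y, y ∂D| ≤ τ * n → |∑ i, g i ^ 2 - n * ∫ y, y ^ 2 ∂D| ≤ τ * n →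
      (∀ p : Fin n → ℝ, (∀ i, p i ∈ Set.Icc (-1 : ℝ) 1) → surplus D p g ≤ surplus D q g) →
      c * n ≤ surplus D q g -
        ∫ x : Fin n → ℝ, |∑ i, q i * x i| ∂(Measure.pi fun _ : Fin n => D) := by
  have hsur := @le_surplus_of_typical D _ hD hm
  have hori := @exists_orientation D _ hD hm
  have hshift := @le_surplus_of_sum_le D _ hD hm
  have habs := @integral_abs_weighted_sum_le D _ hD hm
  set m := ∫ y, y ∂D
  set v := Var[id; D]
  have hb : 0 < b := hm.trans_le hmb
  set V := v / m ^ 2 with hV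
  obtain ⟨c₀, hc₀⟩ : ∃ c₀, c₀ = v / (4 * (b + 1)) := ⟨_, rfl⟩
  have hc₀pos : 0 < c₀ := by rw [hc₀]; positivity
  obtain ⟨w, hw⟩ : ∃ w, w = m ^ 2 / b := ⟨_, rfl⟩
  have hwpos : 0 < w := by rw [hw]; positivity
  obtain ⟨η, hη, hη1, hηv⟩ : ∃ η > 0, η ≤ 1 ∧ η ≤ v / (4 * m) :=
    ⟨min 1 (v / (4 * m)), by positivity, min_le_left _ _, min_le_right _ _⟩
  obtain ⟨τ, hτ, hτη, hτv, hτw⟩ : ∃ τ > 0, τ ≤ η / 2 ∧ τ ≤ v / (4 * (m + 2)) ∧ τ ≤ w / 6 :=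
    ⟨min (η / 2) (min (v / (4 * (m + 2))) (w / 6)), by positivity, min_le_left _ _,
      (min_le_right _ _).trans (min_le_left _ _), (min_le_right _ _).trans (min_le_right _ _)⟩
  obtain ⟨l, hl, hlc, hlw⟩ : ∃ l > 0, l ≤ c₀ / 4 ∧ l ≤ w / 2 :=
    ⟨min (c₀ / 4) (w / 2), by positivity, min_le_left _ _, min_le_right _ _⟩
  obtain ⟨δ, hδ, hδ4, hδc⟩ : ∃ δ > 0, δ ≤ 1 / 4 ∧ δ ≤ c₀ / (8 * m) :=
    ⟨min (1 / 4) (c₀ / (8 * m)), by positivity, min_le_left _ _, min_le_right _ _⟩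
  rw [le_div_iff₀ (by positivity)] at hηv hτv hδc
  obtain ⟨K, hK⟩ : ∃ K, K = 8 * V * b / δ ^ 2 := ⟨_, rfl⟩
  have hKpos : 0 < K := by rw [hK]; positivity
  refine ⟨min (c₀ / 4) (w / 2), by positivity, τ, hτ, ?_⟩
  filter_upwards [eventually_le_mul_natCast (4 * V) (by positivity : 0 < δ ^ 2),
    eventually_le_mul_natCast (4 * V) (by positivity : 0 < (η / (2 * (b + 1))) ^ 2),
    eventually_le_mul_natCast (v / (4 * l)) (by positivity : 0 < c₀ / 4),
    eventually_le_mul_natCast (K * (1 + 2 / δ) + v / (4 * l)) (by positivity : 0 < w / 2),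
    Filter.eventually_gt_atTop 0] with n hn1 hn2 hn3 hn4 hn g q hg hq hT hS hopt
  have hn' : (0 : ℝ) < n := by exact_mod_cast hn
  have hσ := hsur hn hg hmb hη hη1 (by linarith) hτ (by linarith) (by linarith) hT hS hn2 hopt
  rw [← hc₀] at hσ
  have hA := habs hn hq hl
  obtain ⟨p, hp, hpq, hpg, hpf⟩ := hori hn hq hδ hn1 (lt_of_lt_of_le (by positivity) hσ)
  rw [← hpq] at hA
  have hln := mul_le_mul_of_nonneg_right hlc hn'.le
  have hlnw := mul_le_mul_of_nonneg_right hlw hn'.le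
  rcases le_or_gt (∑ i, p i) (-(2 * δ * n)) with hf | hf
  · refine (mul_le_mul_of_nonneg_right (min_le_right _ _) hn'.le).trans ?_
    obtain ⟨h1, h2⟩ := hshift hn hg hp hδ hδ4 hf hpg hopt hK.ge
    rw [abs_of_nonpos (by nlinarith [mul_pos hδ hn'])] at hA
    have hbf : ∑ i, g i + ∑ i, p i * g i ≤ b * (n + ∑ i, p i) := by
      calc ∑ i, g i + ∑ i, p i * g i = ∑ i, (1 + p i) * g i := by
            rw [← Finset.sum_add_distrib]; exact Finset.sum_congr rfl fun i _ => by ring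
        _ ≤ ∑ i, (1 + p i) * b := Finset.sum_le_sum fun i _ =>
            mul_le_mul_of_nonneg_left (hg i).2 (by linarith [(hp i).1])
        _ = b * (n + ∑ i, p i) := by
            rw [← Finset.sum_mul, Finset.sum_add_distrib]; simp; ring
    set T := ∑ i, g i
    set a := ∑ i, p i * g i
    set f := ∑ i, p i
    have hTa : T - a ≤ K / δ := by rw [le_div_iff₀ hδ]; linarith
    have hTn : (m - τ) * n ≤ T := by linarith [(abs_le.1 hT).1]
    have hmb1 : m / b ≤ 1 := (div_le_one hb).2 hmb
    have hmb0 : 0 < m / b := by positivity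
    have hmf : m / b * (T + a) ≤ m * n + m * f := by
      have := mul_le_mul_of_nonneg_left hbf hmb0.le
      rw [← mul_assoc, div_mul_cancel₀ _ hb.ne'] at this
      linarith
    have hKδ : 0 < K / δ := by positivity
    have h3 : m / b * (2 * ((m - τ) * n) - K / δ) ≤ m / b * (T + a) :=
      mul_le_mul_of_nonneg_left (by linarith) hmb0.le
    have hwm : m / b * m = w := by rw [hw]; ring
    have h4 : m / b * (2 * ((m - τ) * n) - K / δ) ≥ 2 * w * n - 2 * τ * n - K / δ := by
      have e : m / b * (2 * ((m - τ) * n) - K / δ)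
          = 2 * (m / b * m) * n - m / b * (2 * τ * n + K / δ) := by ring
      rw [e, hwm]
      have := mul_le_mul_of_nonneg_right hmb1 (by positivity : 0 ≤ 2 * τ * n + K / δ)
      linarith
    have h5 : K * (1 + 2 / δ) = K + 2 * (K / δ) := by ring
    have h6 := mul_le_mul_of_nonneg_right hτw hn'.le
    rw [h5] at hn4
    linarith
  · refine (mul_le_mul_of_nonneg_right (min_le_left _ _) hn'.le).trans ?_
    have hfabs : |∑ i, p i| ≤ 2 * δ * n := abs_le.2 ⟨hf.le, by nlinarith [mul_pos hδ hn']⟩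
    have h7 := mul_le_mul_of_nonneg_left hfabs hm.le
    have h8 := mul_le_mul_of_nonneg_right hδc hn'.le
    linarith

lemma choPayoff_eq {n : ℕ} (q gD gC : Fin n → ℝ) :
    choPayoff q gD gC = (∑ i, gC i + |∑ i, q i * gC i|) / 2 := by
  unfold choPayoff
  rw [sum_share_pile1, sum_share_pile2]
  split_ifs with h
  · rcases h with h | h
    · rw [abs_of_pos h]
    · rw [h.1, abs_zero]
  · rw [abs_of_nonpos (not_lt.1 fun h' => h (Or.inl h')), sub_eq_add_neg]

lemma le_divPayoff {n : ℕ} (q gD gC : Fin n → ℝ) :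
    (∑ i, gD i + ∑ i, q i * gD i) / 2
      - {x : Fin n → ℝ | 0 < ∑ i, q i * x i}.indicator 1 gC * ∑ i, q i * gD i
      ≤ divPayoff q gD gC := by
  unfold divPayoff
  rw [sum_share_pile1, sum_share_pile2]
  by_cases h : 0 < ∑ i, q i * gC i
  · have hp : picksPile1 q gD gC := Or.inl h
    rw [if_pos hp, Set.indicator_of_mem (by exact h)]
    simp only [Pi.one_apply]
    linarith
  · rw [Set.indicator_of_notMem (by exact h)]
    split_ifs with h'
    · rcases h' with h' | h'
      · exact absurd h' h
      · linarith [h'.2]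
    · linarith

lemma abs_sum_mul_le {n : ℕ} {r g : Fin n → ℝ} (hr : ∀ i, |r i| ≤ 1) :
    |∑ i, r i * g i| ≤ ∑ i, |g i| :=
  (Finset.abs_sum_le_sum_abs _ _).trans (Finset.sum_le_sum fun i _ => by
    rw [abs_mul]; exact mul_le_of_le_one_left (abs_nonneg _) (hr i))

lemma abs_share_le {t : ℝ} (ht : t ∈ Set.Icc (-1 : ℝ) 1) :
    |(1 + t) / 2| ≤ 1 ∧ |(1 - t) / 2| ≤ 1 := by
  obtain ⟨h1, h2⟩ := ht
  constructor <;> rw [abs_le] <;> constructor <;> linarith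

lemma abs_divPayoff_le {n : ℕ} {q : Fin n → ℝ} (hq : ∀ i, q i ∈ Set.Icc (-1 : ℝ) 1)
    (gD gC : Fin n → ℝ) : |divPayoff q gD gC| ≤ ∑ i, |gD i| := by
  unfold divPayoff
  split_ifs
  · exact abs_sum_mul_le fun i => (abs_share_le (hq i)).2
  · exact abs_sum_mul_le fun i => (abs_share_le (hq i)).1

lemma abs_choPayoff_le {n : ℕ} {q : Fin n → ℝ} (hq : ∀ i, q i ∈ Set.Icc (-1 : ℝ) 1)
    (gD gC : Fin n → ℝ) : |choPayoff q gD gC| ≤ ∑ i, |gC i| := by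
  unfold choPayoff
  split_ifs
  · exact abs_sum_mul_le fun i => (abs_share_le (hq i)).1
  · exact abs_sum_mul_le fun i => (abs_share_le (hq i)).2

lemma measurableSet_picksPile1 {n : ℕ} {s : (Fin n → ℝ) → (Fin n → ℝ)} (hs : Measurable s) :
    MeasurableSet {z : (Fin n → ℝ) × (Fin n → ℝ) | picksPile1 (s z.1) z.1 z.2} := by
  have h1 : Measurable fun z : (Fin n → ℝ) × (Fin n → ℝ) => ∑ i, s z.1 i * z.2 i := by fun_prop
  have h2 : Measurable fun z : (Fin n → ℝ) × (Fin n → ℝ) => ∑ i, s z.1 i * z.1 i := by fun_prop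
  exact (measurableSet_lt measurable_const h1).union
    ((measurableSet_eq_fun h1 measurable_const).inter (measurableSet_lt h2 measurable_const))

lemma measurable_divPayoff {n : ℕ} {s : (Fin n → ℝ) → (Fin n → ℝ)} (hs : Measurable s) :
    Measurable fun z : (Fin n → ℝ) × (Fin n → ℝ) => divPayoff (s z.1) z.1 z.2 := by
  unfold divPayoff
  exact Measurable.ite (measurableSet_picksPile1 hs) (by fun_prop) (by fun_prop)

lemma measurable_choPayoff {n : ℕ} {s : (Fin n → ℝ) → (Fin n → ℝ)} (hs : Measurable s) :
    Measurable fun z : (Fin n → ℝ) × (Fin n → ℝ) => choPayoff (s z.1) z.1 z.2 := by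
  unfold choPayoff
  exact Measurable.ite (measurableSet_picksPile1 hs) (by fun_prop) (by fun_prop)

lemma integrable_sum_abs (hD : Integrable id D) (n : ℕ) :
    Integrable (fun x : Fin n → ℝ => ∑ i, |x i|) (Measure.pi fun _ : Fin n => D) :=
  integrable_finsetSum _ fun i _ =>
    ((measurePreserving_eval (fun _ : Fin n => D) i).integrable_comp_of_integrable hD).abs

lemma integrable_divPayoff (hD : Integrable id D) {n : ℕ} {s : (Fin n → ℝ) → (Fin n → ℝ)}
    (hs : Measurable s) (hbox : ∀ g i, s g i ∈ Set.Icc (-1 : ℝ) 1) :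
    Integrable (fun z : (Fin n → ℝ) × (Fin n → ℝ) => divPayoff (s z.1) z.1 z.2)
      ((Measure.pi fun _ : Fin n => D).prod (Measure.pi fun _ : Fin n => D)) :=
  ((integrable_sum_abs hD n).comp_fst _).mono' (measurable_divPayoff hs).aestronglyMeasurable
    (Filter.Eventually.of_forall fun z => abs_divPayoff_le (hbox z.1) z.1 z.2)

lemma integrable_choPayoff (hD : Integrable id D) {n : ℕ} {s : (Fin n → ℝ) → (Fin n → ℝ)}
    (hs : Measurable s) (hbox : ∀ g i, s g i ∈ Set.Icc (-1 : ℝ) 1) :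
    Integrable (fun z : (Fin n → ℝ) × (Fin n → ℝ) => choPayoff (s z.1) z.1 z.2)
      ((Measure.pi fun _ : Fin n => D).prod (Measure.pi fun _ : Fin n => D)) :=
  ((integrable_sum_abs hD n).comp_snd _).mono' (measurable_choPayoff hs).aestronglyMeasurable
    (Filter.Eventually.of_forall fun z => abs_choPayoff_le (hbox z.1) z.1 z.2)

lemma integral_sum_eval (hD : Integrable id D) (n : ℕ) :
    ∫ x : Fin n → ℝ, ∑ i, x i ∂(Measure.pi fun _ : Fin n => D) = n * ∫ y, y ∂D := by
  simpa using integral_weighted_sum hD (fun _ : Fin n => 1)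

lemma integrable_weighted_sum (hD : MemLp id 2 D) {n : ℕ} (q : Fin n → ℝ) :
    Integrable (fun x : Fin n → ℝ => ∑ i, q i * x i) (Measure.pi fun _ : Fin n => D) :=
  (memLp_weighted_sum hD q).integrable one_le_two

lemma integrable_sum_eval (hD : MemLp id 2 D) (n : ℕ) :
    Integrable (fun x : Fin n → ℝ => ∑ i, x i) (Measure.pi fun _ : Fin n => D) := by
  simpa using integrable_weighted_sum hD (fun _ : Fin n => 1)

lemma integral_choPayoff (hD : MemLp id 2 D) {n : ℕ} (q gD : Fin n → ℝ) :
    ∫ gC, choPayoff q gD gC ∂(Measure.pi fun _ : Fin n => D)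
      = (n * ∫ y, y ∂D
        + ∫ x : Fin n → ℝ, |∑ i, q i * x i| ∂(Measure.pi fun _ : Fin n => D)) / 2 := by
  simp only [choPayoff_eq]
  rw [integral_div, integral_add (integrable_sum_eval hD n) (integrable_weighted_sum hD q).abs,
    integral_sum_eval (hD.integrable one_le_two)]

lemma le_integral_divPayoff {n : ℕ} {q : Fin n → ℝ} (hq : ∀ i, q i ∈ Set.Icc (-1 : ℝ) 1)
    (gD : Fin n → ℝ) :
    (∑ i, gD i + surplus D q gD) / 2
      ≤ ∫ gC, divPayoff q gD gC ∂(Measure.pi fun _ : Fin n => D) := by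
  have hi : Integrable (fun gC : Fin n → ℝ => divPayoff q gD gC)
      (Measure.pi fun _ : Fin n => D) := by
    refine (integrable_const (∑ i, |gD i|)).mono' ?_
      (Filter.Eventually.of_forall fun x => abs_divPayoff_le hq gD x)
    exact ((measurable_divPayoff (measurable_const (a := q))).comp
      (measurable_const.prodMk measurable_id : Measurable fun x : Fin n → ℝ => (gD, x))
      ).aestronglyMeasurable
  have hind : Integrable ({x : Fin n → ℝ | 0 < ∑ i, q i * x i}.indicator (1 : (Fin n → ℝ) → ℝ))
      (Measure.pi fun _ : Fin n => D) :=
    (integrable_const (1 : ℝ)).indicator (measurableSet_prefers q)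
  refine le_trans (le_of_eq ?_) (integral_mono
    ((integrable_const _).sub (hind.mul_const _)) hi fun x => le_divPayoff q gD x)
  rw [integral_sub' (integrable_const _) (hind.mul_const _), integral_const, integral_mul_const,
    integral_indicator_one (measurableSet_prefers q)]
  rw [probReal_univ, one_smul, surplus, chooseProb, Measure.real]
  ring

end Payoffs

section Typical

variable {D : Measure ℝ} [IsProbabilityMeasure D]

lemma variance_id_pos (hD : MemLp id 2 D) (htwo : ∀ c : ℝ, D {c} ≠ 1) : 0 < Var[id; D] := by
  refine (variance_nonneg _ _).lt_of_ne fun h => htwo D[id] ?_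
  rw [← prob_compl_eq_zero_iff (measurableSet_singleton _)]
  exact ae_eq_integral_of_variance_eq_zero hD h.symm

lemma integral_id_pos (hD : Integrable id D) (hpos : ∀ᵐ x ∂D, 0 ≤ x) (hzero : D {0} ≠ 1) :
    0 < ∫ y, y ∂D := by
  refine (integral_nonneg_of_ae hpos).lt_of_ne fun h => hzero ?_
  rw [← prob_compl_eq_zero_iff (measurableSet_singleton _)]
  exact (integral_eq_zero_iff_of_nonneg_ae hpos hD).1 h.symm

lemma ae_pi_mem {s : Set ℝ} (h : ∀ᵐ x ∂D, x ∈ s) (n : ℕ) :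
    ∀ᵐ x : Fin n → ℝ ∂(Measure.pi fun _ : Fin n => D), ∀ i, x i ∈ s :=
  ae_all_iff.2 fun i => (measurePreserving_eval (fun _ : Fin n => D) i).quasiMeasurePreserving.ae h

lemma integral_abs_weighted_sum_le_mean (hD : MemLp id 2 D) (hpos : ∀ᵐ x ∂D, x ∈ Set.Ici 0)
    {n : ℕ} {q : Fin n → ℝ} (hq : ∀ i, q i ∈ Set.Icc (-1 : ℝ) 1) :
    ∫ x : Fin n → ℝ, |∑ i, q i * x i| ∂(Measure.pi fun _ : Fin n => D) ≤ n * ∫ y, y ∂D := by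
  rw [← integral_sum_eval (hD.integrable one_le_two)]
  refine integral_mono_ae (integrable_weighted_sum hD q).abs (integrable_sum_eval hD n) ?_
  filter_upwards [ae_pi_mem hpos n] with x hx
  refine (abs_sum_mul_le fun i => abs_le.2 (hq i)).trans (le_of_eq ?_)
  exact Finset.sum_congr rfl fun i _ => abs_of_nonneg (hx i)

/-- The normalized squared deviation of the first two empirical moments from their means. -/
noncomputable def momentDeviation (D : Measure ℝ) (τ : ℝ) {n : ℕ} (g : Fin n → ℝ) : ℝ :=
  ((∑ i, g i - n * ∫ y, y ∂D) ^ 2 + (∑ i, g i ^ 2 - n * ∫ y, y ^ 2 ∂D) ^ 2) / (τ * n) ^ 2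

lemma momentDeviation_nonneg (D : Measure ℝ) (τ : ℝ) {n : ℕ} (g : Fin n → ℝ) :
    0 ≤ momentDeviation D τ g := by
  unfold momentDeviation; positivity

lemma typical_of_momentDeviation_lt_one {D : Measure ℝ} {τ : ℝ} (hτ : 0 < τ) {n : ℕ} (hn : 0 < n)
    {g : Fin n → ℝ} (h : momentDeviation D τ g < 1) :
    |∑ i, g i - n * ∫ y, y ∂D| ≤ τ * n ∧ |∑ i, g i ^ 2 - n * ∫ y, y ^ 2 ∂D| ≤ τ * n := by
  have hn' : (0 : ℝ) < n := by exact_mod_cast hn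
  unfold momentDeviation at h
  rw [div_lt_one (by positivity)] at h
  constructor <;> refine abs_le_of_sq_le_sq ?_ (by positivity)
  · linarith [sq_nonneg (∑ i, g i ^ 2 - n * ∫ y, y ^ 2 ∂D)]
  · linarith [sq_nonneg (∑ i, g i - n * ∫ y, y ∂D)]

lemma integrable_sum_sub_sq {φ : ℝ → ℝ} (hφ : MemLp φ 2 D) (n : ℕ) (m : ℝ) :
    Integrable (fun x : Fin n → ℝ => (∑ i, φ (x i) - m) ^ 2) (Measure.pi fun _ : Fin n => D) := by
  simpa using integrable_weighted_sum_sub_sq hφ (fun _ : Fin n => 1) m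

lemma integral_sum_sub_sq_le {φ : ℝ → ℝ} (hφ : MemLp φ 2 D) (n : ℕ) :
    ∫ x : Fin n → ℝ, (∑ i, φ (x i) - n * ∫ y, φ y ∂D) ^ 2 ∂(Measure.pi fun _ : Fin n => D)
      ≤ n * Var[φ; D] := by
  simpa using integral_weighted_sum_sub_sq_le hφ (q := fun _ : Fin n => 1) (by simp)

lemma integrable_momentDeviation (hD : MemLp id 2 D) (hD2 : MemLp (fun x : ℝ => x ^ 2) 2 D)
    (τ : ℝ) (n : ℕ) :
    Integrable (fun g : Fin n → ℝ => momentDeviation D τ g) (Measure.pi fun _ : Fin n => D) :=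
  ((integrable_sum_sub_sq hD n _).add (integrable_sum_sub_sq hD2 n _)).div_const _

lemma integral_momentDeviation_le (hD : MemLp id 2 D) (hD2 : MemLp (fun x : ℝ => x ^ 2) 2 D)
    (τ : ℝ) (n : ℕ) :
    ∫ g : Fin n → ℝ, momentDeviation D τ g ∂(Measure.pi fun _ : Fin n => D)
      ≤ (n * Var[id; D] + n * Var[fun x => x ^ 2; D]) / (τ * n) ^ 2 := by
  unfold momentDeviation
  rw [integral_div]
  refine div_le_div_of_nonneg_right ?_ (by positivity)
  refine (integral_add (integrable_sum_sub_sq hD n _) (integrable_sum_sub_sq hD2 n _)).trans_le ?_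
  exact add_le_add (integral_sum_sub_sq_le hD n) (integral_sum_sub_sq_le hD2 n)

end Typical

/-- Let `D` be a probability distribution on `ℝ` whose support is bounded,
nonnegative, and contains at least two distinct values, and suppose the expectation `Mn n`
of the minimum of `n` i.i.d. draws from `D` is either bounded away from zero or vanishes
subexponentially.  Then for all sufficiently large `n`, in divide-and-choose with `n` goods
and all values i.i.d. from `D`, under any measurable divider strategy that maximizes his
expected utility pointwise, the divider is ex ante strictly better off: `E[u^C] < E[u^D]`. -/
theorem divider_better_off_many_goods
    (D : Measure ℝ) [IsProbabilityMeasure D]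
    (hbdd : ∃ b : ℝ, D {x | b < x} = 0)
    (hpos : D {x | x < 0} = 0)
    (htwo : ∀ c : ℝ, D {c} ≠ 1)
    (Mn : ℕ → ℝ)
    (hMn : ∀ n : ℕ, Mn (n + 1) =
      ∫ x : Fin (n + 1) → ℝ, (⨅ i, x i) ∂(Measure.pi fun _ : Fin (n + 1) => D))
    (hmin : (∃ c : ℝ, 0 < c ∧ ∀ n : ℕ, c ≤ Mn (n + 1)) ∨
      (∀ c : ℝ, 0 < c →
        Filter.Tendsto (fun n : ℕ => Real.exp (c * n) * Mn (n + 1))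
          Filter.atTop Filter.atTop)) :
    ∃ N : ℕ, ∀ n : ℕ, N ≤ n →
      ∀ s : (Fin n → ℝ) → (Fin n → ℝ), Measurable s →
        (∀ gD : Fin n → ℝ, ∀ i, s gD i ∈ Set.Icc (-1 : ℝ) 1) →
        (∀ gD q : Fin n → ℝ, (∀ i, q i ∈ Set.Icc (-1 : ℝ) 1) →
          divUtility D q gD ≤ divUtility D (s gD) gD) →
        (∫ gD, ∫ gC, choPayoff (s gD) gD gC
            ∂(Measure.pi fun _ : Fin n => D) ∂(Measure.pi fun _ : Fin n => D)) <
        (∫ gD, ∫ gC, divPayoff (s gD) gD gC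
            ∂(Measure.pi fun _ : Fin n => D) ∂(Measure.pi fun _ : Fin n => D)) := by
  have hmem : ∀ᵐ x ∂D, 0 ≤ x := by
    rw [ae_iff]; simpa using hpos
  obtain ⟨b, hb⟩ := hbdd
  have hmemb : ∀ᵐ x ∂D, x ∈ Set.Icc 0 b := by
    filter_upwards [hmem, (by rw [ae_iff]; simpa using hb : ∀ᵐ x ∂D, x ≤ b)] with x h0 h1
    exact ⟨h0, h1⟩
  have hD : MemLp id 2 D := memLp_of_bounded hmemb (by fun_prop) 2
  have hD2 : MemLp (fun x : ℝ => x ^ 2) 2 D := by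
    refine memLp_of_bounded (a := 0) (b := b ^ 2) ?_ (by fun_prop) 2
    filter_upwards [hmemb] with x hx
    exact ⟨sq_nonneg x, pow_le_pow_left₀ hx.1 hx.2 2⟩
  have hD1 : Integrable id D := hD.integrable one_le_two
  have hm := integral_id_pos hD1 hmem (htwo 0)
  have hmb : ∫ y, y ∂D ≤ b := by
    have := integral_mono_ae hD1 (integrable_const b) (hmemb.mono fun x hx => hx.2)
    simpa using this
  obtain ⟨c, hc, τ, hτ, hgap⟩ := exists_surplus_gap hD hm (variance_id_pos hD htwo) hmb
  set m := ∫ y, y ∂D with hm_def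
  set C := (c + m) * ((Var[id; D] + Var[fun x => x ^ 2; D]) / τ ^ 2) with hC
  obtain ⟨N, hN⟩ := Filter.eventually_atTop.1
    ((hgap.and (eventually_le_mul_natCast (C + 1) hc)).and (Filter.eventually_gt_atTop 0))
  refine ⟨N, fun n hn s hs hbox hopt => ?_⟩
  obtain ⟨⟨hgap, hCn⟩, hn0⟩ := hN n hn
  have hn' : (0 : ℝ) < n := by exact_mod_cast hn0
  have hiD := (integrable_divPayoff hD1 hs hbox).integral_prod_left
  have hiC := (integrable_choPayoff hD1 hs hbox).integral_prod_left
  have hiT : Integrable (fun g : Fin n → ℝ => ∑ i, g i - n * m) (Measure.pi fun _ : Fin n => D) :=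
    (integrable_sum_eval hD n).sub (integrable_const _)
  have hiR := integrable_momentDeviation hD hD2 τ n
  rw [← sub_pos, ← integral_sub hiD hiC]
  have hlow : ∫ g : Fin n → ℝ, ((∑ i, g i - n * m)
      + (c * n - (c + m) * n * momentDeviation D τ g)) / 2 ∂(Measure.pi fun _ : Fin n => D)
      ≤ ∫ gD, (∫ gC, divPayoff (s gD) gD gC ∂(Measure.pi fun _ : Fin n => D)
        - ∫ gC, choPayoff (s gD) gD gC ∂(Measure.pi fun _ : Fin n => D))
        ∂(Measure.pi fun _ : Fin n => D) := by
    refine integral_mono_ae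
      ((hiT.add ((integrable_const _).sub (hiR.const_mul _))).div_const 2) (hiD.sub hiC) ?_
    filter_upwards [ae_pi_mem hmemb n] with g hg
    have hoptg : ∀ p : Fin n → ℝ, (∀ i, p i ∈ Set.Icc (-1 : ℝ) 1) →
        surplus D p g ≤ surplus D (s g) g := fun p hp => by
      have := hopt g p hp
      rw [divUtility_eq_surplus, divUtility_eq_surplus] at this
      linarith
    have h1 := le_integral_divPayoff (D := D) (hbox g) g
    have h2 := integral_choPayoff hD (s g) g
    rw [← hm_def] at h2
    simp only [h2]
    suffices h : c * n - (c + m) * n * momentDeviation D τ g ≤ surplus D (s g) g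
        - ∫ x : Fin n → ℝ, |∑ i, s g i * x i| ∂(Measure.pi fun _ : Fin n => D) by linarith
    rcases lt_or_ge (momentDeviation D τ g) 1 with h | h
    · obtain ⟨hT, hS⟩ := typical_of_momentDeviation_lt_one hτ hn0 h
      have h3 := hgap g (s g) hg (hbox g) hT hS hoptg
      have h4 : 0 ≤ (c + m) * n * momentDeviation D τ g :=
        mul_nonneg (by positivity) (momentDeviation_nonneg D τ g)
      linarith
    · have h3 := integral_abs_weighted_sum_le_mean hD hmem (hbox g)
      rw [← hm_def] at h3
      have h4 := hoptg 0 fun i => by simp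
      have h5 : surplus D 0 g = 0 := by simp [surplus]
      have h6 := mul_le_mul_of_nonneg_left h (by positivity : 0 ≤ (c + m) * n)
      linarith
  refine lt_of_lt_of_le ?_ hlow
  have hiR' := hiR.const_mul ((c + m) * n)
  have hiL : Integrable (fun g : Fin n → ℝ => c * n - (c + m) * n * momentDeviation D τ g)
      (Measure.pi fun _ : Fin n => D) := (integrable_const _).sub hiR'
  rw [integral_div, integral_add hiT hiL,
    integral_sub (integrable_sum_eval hD n) (integrable_const _), integral_sum_eval hD1,
    integral_sub (integrable_const _) hiR', integral_const, integral_const, integral_const_mul,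
    ← hm_def]
  simp only [probReal_univ, one_smul]
  have hR := mul_le_mul_of_nonneg_left (integral_momentDeviation_le hD hD2 τ n)
    (by positivity : 0 ≤ (c + m) * n)
  have hRC : (c + m) * n * ((n * Var[id; D] + n * Var[fun x => x ^ 2; D]) / (τ * n) ^ 2) = C := by
    rw [hC]; field_simp
  linarith
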